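/- Let G be a d-regular simple graph on n vertices (d > 0) whose uniform random walk matrix has at most r eigenvalues (counted with multiplicity) larger than λ > 0. Let Σ be a finite alphabet and let X = (X₁,…,Xₙ) be a random vector with values in Σⁿ (distributed according to a probability measure μ). Suppose the global correlation is small: (1/n²) · Σ_{u,v ∈ [n]} D_KL( law(Xᵤ, Xᵥ) ‖ law(Xᵤ) ⊗ law(Xᵥ) ) ≤ δ. Then the local correlation satisfies (1/(n·d)) · Σ_{(u,v): u adjacent to v} Σ_{σ∈Σ} ( Pr[Xᵤ = σ ∧ Xᵥ = σ] − Pr[Xᵤ = σ]·Pr[Xᵥ = σ] )² ≤ √(2·r·δ) + λ, where the outer sum is over ordered pairs of adjacent vertices. -/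

import Mathlib

-- `prEvent w E` is the probability of the event `E` under the finitely supported
-- probability distribution given by the weight function `w`.
open scoped Classical in
noncomputable def prEvent {Ω : Type*} [Fintype Ω] (w : Ω → ℝ) (E : Ω → Prop) : ℝ :=
  ∑ ω ∈ Finset.univ.filter E, w ω

/-- The Kullback–Leibler divergence `D_KL(p ‖ q)` between two finitely supported
distributions given by mass functions `p` and `q` (with the usual convention
`0 · log(0/q) = 0`, which is what the formula below yields since `log 0 = 0`
in Lean). -/
noncomputable def klDivFin {β : Type*} [Fintype β] (p q : β → ℝ) : ℝ :=
  ∑ x, p x * Real.log (p x / q x)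

/-!
Let `M(u, v) = ∑_σ Cov(1[Xᵤ = σ], 1[Xᵥ = σ])²`. Covariance matrices are positive semidefinite, and
by the Schur product theorem so is `M`, a sum of entrywise squares of covariance matrices. A Pinsker
type inequality for the `ℓ²` distance gives `M(u, v) ≤ 2 I(Xᵤ; Xᵥ)`; since also `0 ≤ M(u, v) ≤ 1`,
we get `tr M ≤ n` and `‖M‖_F² ≤ 2 n² δ`.

The local correlation is `tr(W M) / n` for the random walk matrix `W`. In an orthonormal eigenbasis
of `W` this trace is `∑ᵢ λᵢ aᵢ`, where `aᵢ ≥ 0` are the diagonal entries of `M` in that basis. The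
eigenvalues at most `lam` contribute at most `lam * tr M`. The others are at most `1`, and there are
at most `r` of them, so by Cauchy–Schwarz they contribute at most `√(r ∑ᵢ aᵢ²) ≤ √r ‖M‖_F`.
-/

open Finset Matrix InformationTheory

/-! ### Trace inequalities for Hermitian matrices -/

theorem sum_mul_le_sqrt_card_filter_mul_sum_sq_add {ι : Type*} {s : Finset ι} {l a : ι → ℝ} {c : ℝ}
    (hc : 0 ≤ c) (hl : ∀ i ∈ s, l i ≤ 1) (ha : ∀ i ∈ s, 0 ≤ a i) :
    ∑ i ∈ s, l i * a i ≤ √(#{i ∈ s | c < l i} * ∑ i ∈ s, a i ^ 2) + c * ∑ i ∈ s, a i := by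
  have hlarge : ∑ i ∈ s with c < l i, a i ≤ √(#{i ∈ s | c < l i} * ∑ i ∈ s, a i ^ 2) := by
    refine Real.le_sqrt_of_sq_le (sq_sum_le_card_mul_sum_sq.trans ?_)
    gcongr
    exact filter_subset _ _
  calc ∑ i ∈ s, l i * a i
      ≤ ∑ i ∈ s, ((if c < l i then a i else 0) + c * a i) := by
        refine sum_le_sum fun i hi => ?_
        have hca : 0 ≤ c * a i := mul_nonneg hc (ha i hi)
        split_ifs with h
        · linarith [mul_le_of_le_one_left (ha i hi) (hl i hi)]
        · linarith [mul_le_mul_of_nonneg_right (not_lt.1 h) (ha i hi)]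
    _ = ∑ i ∈ s with c < l i, a i + c * ∑ i ∈ s, a i := by
        rw [sum_add_distrib, sum_filter, mul_sum]
    _ ≤ _ := by gcongr

section ConjStarAlgAut

variable {n R : Type*} [Fintype n] [DecidableEq n] [CommRing R] [StarRing R]

theorem trace_conjStarAlgAut (U : unitary (Matrix n n R)) (M : Matrix n n R) :
    (Unitary.conjStarAlgAut R _ U M).trace = M.trace := by
  rw [Unitary.conjStarAlgAut_apply, trace_mul_cycle, Unitary.coe_star_mul_self, one_mul]

theorem posSemidef_conjStarAlgAut [PartialOrder R] (U : unitary (Matrix n n R)) {M : Matrix n n R}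
    (hM : M.PosSemidef) : (Unitary.conjStarAlgAut R _ U M).PosSemidef := by
  rw [Unitary.conjStarAlgAut_apply]
  exact hM.mul_mul_conjTranspose_same (U : Matrix n n R)

end ConjStarAlgAut

section HermitianMatrix

open scoped ComplexOrder

variable {V 𝕜 : Type*} [Fintype V] [RCLike 𝕜] {W M : Matrix V V 𝕜}

theorem re_trace_mul_self_eq_sum_norm_sq (hM : M.IsHermitian) :
    RCLike.re (M * M).trace = ∑ u, ∑ v, ‖M u v‖ ^ 2 := by
  nth_rw 2 [← hM.eq]
  simp [trace, mul_apply, ← RCLike.normSq_eq_def', RCLike.mul_conj]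

theorem sum_re_diag_sq_le_re_trace_mul_self (hM : M.IsHermitian) :
    ∑ u, RCLike.re (M u u) ^ 2 ≤ RCLike.re (M * M).trace := by
  rw [re_trace_mul_self_eq_sum_norm_sq hM]
  refine sum_le_sum fun u _ => le_trans ?_ (single_le_sum (f := fun v => ‖M u v‖ ^ 2)
    (fun v _ => sq_nonneg _) (mem_univ u))
  exact sq_le_sq' (neg_le_of_abs_le (RCLike.abs_re_le_norm _)) (RCLike.re_le_norm _)

variable [DecidableEq V]

theorem re_trace_mul_le_of_eigenvalues_le_one (hW : W.IsHermitian)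
    (hle : ∀ i, hW.eigenvalues i ≤ 1) (hM : M.PosSemidef) {c : ℝ} (hc : 0 ≤ c) :
    RCLike.re (W * M).trace ≤
      √(#{i | c < hW.eigenvalues i} * RCLike.re (M * M).trace) + c * RCLike.re M.trace := by
  set φ := Unitary.conjStarAlgAut 𝕜 (Matrix V V 𝕜) (star hW.eigenvectorUnitary) with hφ
  have hφM : (φ M).PosSemidef := posSemidef_conjStarAlgAut _ hM
  have htrace (A : Matrix V V 𝕜) : (φ A).trace = A.trace := trace_conjStarAlgAut _ A
  calc RCLike.re (W * M).trace = RCLike.re (φ W * φ M).trace := by rw [← map_mul, htrace]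
    _ = ∑ i, hW.eigenvalues i * RCLike.re (φ M i i) := by
        rw [hφ, hW.conjStarAlgAut_star_eigenvectorUnitary]
        simp [trace, diagonal_mul]
    _ ≤ √(#{i | c < hW.eigenvalues i} * ∑ i, RCLike.re (φ M i i) ^ 2)
          + c * ∑ i, RCLike.re (φ M i i) :=
        sum_mul_le_sqrt_card_filter_mul_sum_sq_add hc (fun i _ => hle i)
          fun i _ => (RCLike.nonneg_iff.1 hφM.diag_nonneg).1
    _ ≤ √(#{i | c < hW.eigenvalues i} * RCLike.re (φ M * φ M).trace)
          + c * ∑ i, RCLike.re (φ M i i) := by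
        gcongr
        exact sum_re_diag_sq_le_re_trace_mul_self hφM.isHermitian
    _ = _ := by rw [← map_mul, htrace, ← map_sum, ← htrace M]; rfl

theorem abs_eigenvalues_le_of_sum_norm_le (hW : W.IsHermitian) {c : ℝ}
    (hrow : ∀ u, ∑ v, ‖W u v‖ ≤ c) (i : V) : |hW.eigenvalues i| ≤ c := by
  have hμ : Module.End.HasEigenvalue (toLin' W) (hW.eigenvalues i : 𝕜) := by
    rw [Module.End.hasEigenvalue_iff_mem_spectrum, spectrum_toLin']
    exact spectrum.algebraMap_mem 𝕜 (hW.eigenvalues_mem_spectrum_real i)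
  obtain ⟨u, hu⟩ := eigenvalue_mem_ball hμ
  rw [mem_closedBall_iff_norm'] at hu
  calc |hW.eigenvalues i| = ‖(hW.eigenvalues i : 𝕜)‖ := (RCLike.norm_ofReal _).symm
    _ ≤ ‖W u u‖ + ‖W u u - hW.eigenvalues i‖ := norm_le_insert _ _
    _ ≤ ‖W u u‖ + ∑ v ∈ univ.erase u, ‖W u v‖ := by gcongr
    _ = ∑ v, ‖W u v‖ := add_sum_erase _ (fun v => ‖W u v‖) (mem_univ u)
    _ ≤ c := hrow u

end HermitianMatrix

/-! ### Regular graphs -/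

section RegularGraph

variable {V : Type*} [Fintype V] {G : SimpleGraph V} [DecidableRel G.Adj]

theorem sum_sum_ite_adj_eq_trace {R : Type*} [NonAssocSemiring R] (M : Matrix V V R) :
    ∑ u, ∑ v, (if G.Adj u v then M u v else 0) = (G.adjMatrix R * M).trace := by
  rw [sum_comm]
  simp [trace, mul_apply, G.adj_comm]

theorem eigenvalues_inv_smul_adjMatrix_le_one [DecidableEq V] {d : ℕ}
    (hd : 0 < d) (hreg : G.IsRegularOfDegree d) (hW : ((d : ℝ)⁻¹ • G.adjMatrix ℝ).IsHermitian)
    (i : V) : hW.eigenvalues i ≤ 1 := by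
  refine (le_abs_self _).trans (abs_eigenvalues_le_of_sum_norm_le hW (fun u => ?_) i)
  calc ∑ v, ‖((d : ℝ)⁻¹ • G.adjMatrix ℝ) u v‖ = ∑ v, if G.Adj u v then (d : ℝ)⁻¹ else 0 := by
        simp [apply_ite abs]
    _ = d * (d : ℝ)⁻¹ := by
        rw [← sum_filter, sum_const, ← G.neighborFinset_eq_filter,
          G.card_neighborFinset_eq_degree, hreg u, nsmul_eq_mul]
    _ ≤ 1 := (mul_inv_cancel₀ (Nat.cast_pos.2 hd).ne').le

end RegularGraph

/-! ### An `ℓ²` Pinsker inequality -/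

theorem sq_sub_one_div_two_le_klFun {x : ℝ} (hx : 0 ≤ x) (hx1 : x ≤ 1) :
    (x - 1) ^ 2 / 2 ≤ klFun x := by
  rcases hx.eq_or_lt with rfl | hx0
  · norm_num [klFun_zero]
  have hlog : (x - x⁻¹) / 2 ≤ Real.log x := by
    rw [← Real.sinh_log hx0, Real.sinh_le_self_iff]
    exact Real.log_nonpos hx hx1
  calc (x - 1) ^ 2 / 2 = x * ((x - x⁻¹) / 2) + 1 - x := by field_simp; ring
    _ ≤ klFun x := by rw [klFun_apply]; gcongr

theorem sq_sub_one_div_add_one_le_klFun {x : ℝ} (hx : 1 ≤ x) :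
    (x - 1) ^ 2 / (x + 1) ≤ klFun x := by
  have hlog : 2 * (x - 1) / (x - 1 + 2) ≤ Real.log x := by
    simpa using Real.le_log_one_add_of_nonneg (sub_nonneg.2 hx)
  calc (x - 1) ^ 2 / (x + 1) = x * (2 * (x - 1) / (x - 1 + 2)) + 1 - x := by
        have : x - 1 + 2 ≠ 0 := by linarith
        field_simp
        ring
    _ ≤ klFun x := by rw [klFun_apply]; gcongr

theorem sub_add_sq_sub_div_two_le_mul_log_div {p q : ℝ} (hp : p ∈ Set.Icc 0 1)
    (hq : q ∈ Set.Icc 0 1) (hpq : q = 0 → p = 0) :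
    p - q + (p - q) ^ 2 / 2 ≤ p * Real.log (p / q) := by
  obtain ⟨hp0, hp1⟩ := hp
  rcases hq.1.eq_or_lt with rfl | hq0
  · simp [hpq rfl]
  suffices (p - q) ^ 2 / 2 ≤ q * klFun (p / q) by
    have : q * klFun (p / q) = p * Real.log (p / q) + q - p := by
      rw [klFun_apply]
      field_simp
    linarith
  rcases le_total p q with h | h
  · calc (p - q) ^ 2 / 2 ≤ (p - q) ^ 2 / 2 / q := le_div_self (by positivity) hq0 hq.2
      _ = q * ((p / q - 1) ^ 2 / 2) := by field_simp
      _ ≤ q * klFun (p / q) := by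
        gcongr
        exact sq_sub_one_div_two_le_klFun (by positivity) ((div_le_one hq0).2 h)
  · calc (p - q) ^ 2 / 2 ≤ (p - q) ^ 2 / (p + q) := by gcongr; linarith [hq.2]
      _ = q * ((p / q - 1) ^ 2 / (p / q + 1)) := by field_simp
      _ ≤ q * klFun (p / q) := by
        gcongr
        exact sq_sub_one_div_add_one_le_klFun ((one_le_div hq0).2 h)

theorem sum_sq_sub_le_two_mul_klDivFin {β : Type*} [Fintype β] {p q : β → ℝ}
    (hp : p ∈ stdSimplex ℝ β) (hq : q ∈ stdSimplex ℝ β) (hpq : ∀ x, q x = 0 → p x = 0) :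
    ∑ x, (p x - q x) ^ 2 ≤ 2 * klDivFin p q := by
  have h : ∑ x, (p x - q x + (p x - q x) ^ 2 / 2) ≤ klDivFin p q :=
    sum_le_sum fun x _ => sub_add_sq_sub_div_two_le_mul_log_div
      (mem_Icc_of_mem_stdSimplex hp x) (mem_Icc_of_mem_stdSimplex hq x) (hpq x)
  rw [sum_add_distrib, sum_sub_distrib, hp.2, hq.2, ← sum_div] at h
  linarith

/-! ### Covariances of events -/

section Events

variable {Ω : Type*} [Fintype Ω] {w : Ω → ℝ}

theorem prEvent_eq_sum_indicator (w : Ω → ℝ) (E : Ω → Prop) :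
    prEvent w E = ∑ ω, w ω * {ω | E ω}.indicator 1 ω := by
  classical
  simp [prEvent, sum_filter, Set.indicator_apply]

theorem prEvent_nonneg (hw : ∀ ω, 0 ≤ w ω) (E : Ω → Prop) : 0 ≤ prEvent w E :=
  sum_nonneg fun ω _ => hw ω

theorem prEvent_mono (hw : ∀ ω, 0 ≤ w ω) {E F : Ω → Prop} (h : ∀ ω, E ω → F ω) :
    prEvent w E ≤ prEvent w F := by
  classical
  exact sum_le_sum_of_subset_of_nonneg (monotone_filter_right _ fun ω _ => h ω) fun ω _ _ => hw ω

theorem prEvent_le_one (hw : w ∈ stdSimplex ℝ Ω) (E : Ω → Prop) : prEvent w E ≤ 1 := by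
  classical
  exact hw.2 ▸ sum_le_sum_of_subset_of_nonneg (filter_subset _ _) fun ω _ _ => hw.1 ω

theorem prEvent_eq_mem_stdSimplex {β : Type*} [Fintype β] (hw : w ∈ stdSimplex ℝ Ω) (X : Ω → β) :
    (fun b => prEvent w (fun ω => X ω = b)) ∈ stdSimplex ℝ β := by
  classical
  refine ⟨fun b => prEvent_nonneg hw.1 _, ?_⟩
  simp only [prEvent]
  rw [← hw.2, ← sum_fiberwise univ X w]

/-- The covariance of the indicators of the events `E` and `F`. -/
noncomputable def eventCov (w : Ω → ℝ) (E F : Ω → Prop) : ℝ :=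
  prEvent w (fun ω => E ω ∧ F ω) - prEvent w E * prEvent w F

/-- The indicator of the event `E` minus its mean. -/
noncomputable def centeredIndicator (w : Ω → ℝ) (E : Ω → Prop) (ω : Ω) : ℝ :=
  {ω | E ω}.indicator 1 ω - prEvent w E

theorem eventCov_eq_sum_centeredIndicator (hw : ∑ ω, w ω = 1) (E F : Ω → Prop) :
    eventCov w E F = ∑ ω, w ω * (centeredIndicator w E ω * centeredIndicator w F ω) := by
  set e : Ω → ℝ := {ω | E ω}.indicator 1
  set f : Ω → ℝ := {ω | F ω}.indicator 1
  have hEF : prEvent w (fun ω => E ω ∧ F ω) = ∑ ω, w ω * (e ω * f ω) := by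
    rw [prEvent_eq_sum_indicator, Set.ofPred_and, Set.inter_indicator_one]
    rfl
  calc eventCov w E F = ∑ ω, w ω * (e ω * f ω) - prEvent w F * ∑ ω, w ω * e ω
          - prEvent w E * ∑ ω, w ω * f ω + prEvent w E * prEvent w F * ∑ ω, w ω := by
        rw [← prEvent_eq_sum_indicator, ← prEvent_eq_sum_indicator, hw, eventCov, hEF]
        ring
    _ = ∑ ω, w ω * ((e ω - prEvent w E) * (f ω - prEvent w F)) := by
        simp only [mul_sum, ← sum_sub_distrib, ← sum_add_distrib]
        exact sum_congr rfl fun ω _ => by ring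

theorem posSemidef_eventCov {ι : Type*} [Finite ι] (hw : w ∈ stdSimplex ℝ Ω)
    (E : ι → Ω → Prop) : (of fun i j => eventCov w (E i) (E j)).PosSemidef := by
  classical
  convert (PosSemidef.diagonal (d := w) hw.1).mul_mul_conjTranspose_same
    (of fun i => centeredIndicator w (E i)) using 1
  ext i j
  rw [of_apply, eventCov_eq_sum_centeredIndicator hw.2, mul_apply]
  exact sum_congr rfl fun ω _ => by simp [mul_diagonal]; ring

theorem abs_eventCov_le_prEvent (hw : w ∈ stdSimplex ℝ Ω) (E F : Ω → Prop) :
    |eventCov w E F| ≤ prEvent w E :=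
  abs_sub_le_of_nonneg_of_le (prEvent_nonneg hw.1 _) (prEvent_mono hw.1 fun _ h => h.1)
    (mul_nonneg (prEvent_nonneg hw.1 _) (prEvent_nonneg hw.1 _))
    (mul_le_of_le_one_right (prEvent_nonneg hw.1 _) (prEvent_le_one hw _))

end Events

/-! ### Correlation of random variables -/

section RandomVariables

variable {Ω α β : Type*} [Fintype Ω] [Fintype α] [Fintype β] {w : Ω → ℝ}

/-- The mutual information `I(X; Y)` of two random variables on the finite probability space with
weights `w`, as the divergence of the joint law from the product of the marginals. -/
noncomputable def mutualInfo (w : Ω → ℝ) (X : Ω → α) (Y : Ω → β) : ℝ :=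
  klDivFin (fun p : α × β => prEvent w (fun ω => X ω = p.1 ∧ Y ω = p.2))
    (fun p : α × β => prEvent w (fun ω => X ω = p.1) * prEvent w (fun ω => Y ω = p.2))

/-- The correlation of `X` and `Y` whose average over the edges of `G` is the local correlation:
the squared covariances of the indicators of `X = σ` and `Y = σ`, summed over `σ`. -/
noncomputable def sqCorr (w : Ω → ℝ) (X Y : Ω → α) : ℝ :=
  ∑ σ, eventCov w (fun ω => X ω = σ) (fun ω => Y ω = σ) ^ 2

theorem sum_sq_eventCov_le_two_mul_mutualInfo (hw : w ∈ stdSimplex ℝ Ω) (X : Ω → α) (Y : Ω → β) :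
    ∑ σ, ∑ τ, eventCov w (fun ω => X ω = σ) (fun ω => Y ω = τ) ^ 2 ≤ 2 * mutualInfo w X Y := by
  rw [← Fintype.sum_prod_type']
  refine sum_sq_sub_le_two_mul_klDivFin ?joint ?product fun p h => ?absolutelyContinuous
  case joint =>
    simpa only [Prod.ext_iff] using prEvent_eq_mem_stdSimplex hw fun ω => (X ω, Y ω)
  case product =>
    refine ⟨fun p => mul_nonneg (prEvent_nonneg hw.1 _) (prEvent_nonneg hw.1 _), ?_⟩
    rw [Fintype.sum_prod_type]
    dsimp only
    rw [← sum_mul_sum, (prEvent_eq_mem_stdSimplex hw X).2,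
      (prEvent_eq_mem_stdSimplex hw Y).2, one_mul]
  case absolutelyContinuous =>
    refine le_antisymm ?_ (prEvent_nonneg hw.1 _)
    rcases mul_eq_zero.1 h with h | h
    · exact h ▸ prEvent_mono hw.1 fun _ hω => hω.1
    · exact h ▸ prEvent_mono hw.1 fun _ hω => hω.2

theorem sqCorr_le_two_mul_mutualInfo (hw : w ∈ stdSimplex ℝ Ω) (X Y : Ω → α) :
    sqCorr w X Y ≤ 2 * mutualInfo w X Y :=
  (sum_le_sum fun σ _ => single_le_sum (f := fun τ =>
    eventCov w (fun ω => X ω = σ) (fun ω => Y ω = τ) ^ 2) (fun _ _ => sq_nonneg _)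
    (mem_univ σ)).trans (sum_sq_eventCov_le_two_mul_mutualInfo hw X Y)

theorem sqCorr_nonneg (w : Ω → ℝ) (X Y : Ω → α) : 0 ≤ sqCorr w X Y :=
  sum_nonneg fun _ _ => sq_nonneg _

theorem sqCorr_le_one (hw : w ∈ stdSimplex ℝ Ω) (X Y : Ω → α) : sqCorr w X Y ≤ 1 :=
  calc sqCorr w X Y ≤ ∑ σ, prEvent w (fun ω => X ω = σ) := sum_le_sum fun _ _ =>
        (sq_le_sq' (neg_le_of_abs_le (abs_eventCov_le_prEvent hw _ _))
          (le_of_abs_le (abs_eventCov_le_prEvent hw _ _))).trans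
          (pow_le_of_le_one (prEvent_nonneg hw.1 _) (prEvent_le_one hw _) two_ne_zero)
    _ = 1 := (prEvent_eq_mem_stdSimplex hw X).2

variable {V : Type*}

/-- The matrix of the pairwise correlations `sqCorr` of a family of random variables. -/
noncomputable def corrMatrix (w : Ω → ℝ) (X : V → Ω → α) : Matrix V V ℝ :=
  of fun u v => sqCorr w (X u) (X v)

theorem posSemidef_corrMatrix [Finite V] (hw : w ∈ stdSimplex ℝ Ω) (X : V → Ω → α) :
    (corrMatrix w X).PosSemidef := by
  let C (σ : α) : Matrix V V ℝ :=
    of fun u v => eventCov w (fun ω => X u ω = σ) (fun ω => X v ω = σ)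
  have hC (σ : α) : (C σ).PosSemidef := posSemidef_eventCov hw fun u ω => X u ω = σ
  have hsum : corrMatrix w X = ∑ σ, C σ ⊙ C σ := by
    ext u v
    simp [corrMatrix, sqCorr, C, Matrix.sum_apply, sq]
  rw [hsum]
  exact posSemidef_sum _ fun σ _ => (hC σ).hadamard (hC σ)

variable [Fintype V]

theorem trace_corrMatrix_le_card (hw : w ∈ stdSimplex ℝ Ω) (X : V → Ω → α) :
    (corrMatrix w X).trace ≤ Fintype.card V :=
  (sum_le_sum fun u _ => sqCorr_le_one hw (X u) (X u)).trans_eq (by simp)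

theorem trace_corrMatrix_mul_self_le (hw : w ∈ stdSimplex ℝ Ω) (X : V → Ω → α) :
    (corrMatrix w X * corrMatrix w X).trace ≤ 2 * ∑ u, ∑ v, mutualInfo w (X u) (X v) := by
  calc (corrMatrix w X * corrMatrix w X).trace = ∑ u, ∑ v, sqCorr w (X u) (X v) ^ 2 := by
        simpa [corrMatrix] using
          re_trace_mul_self_eq_sum_norm_sq (posSemidef_corrMatrix hw X).isHermitian
    _ ≤ ∑ u, ∑ v, 2 * mutualInfo w (X u) (X v) :=
        sum_le_sum fun u _ => sum_le_sum fun v _ =>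
          (pow_le_of_le_one (sqCorr_nonneg w _ _) (sqCorr_le_one hw _ _) two_ne_zero).trans
            (sqCorr_le_two_mul_mutualInfo hw (X u) (X v))
    _ = 2 * ∑ u, ∑ v, mutualInfo w (X u) (X v) := by simp only [mul_sum]

theorem trace_mul_corrMatrix_le [DecidableEq V] {W : Matrix V V ℝ} (hW : W.IsHermitian)
    (hle : ∀ i, hW.eigenvalues i ≤ 1) {r : ℕ} {c δ : ℝ} (hc : 0 ≤ c)
    (hthreshold : #{i | c < hW.eigenvalues i} ≤ r) (hw : w ∈ stdSimplex ℝ Ω) (X : V → Ω → α)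
    (hglobal : ∑ u, ∑ v, mutualInfo w (X u) (X v) ≤ (Fintype.card V : ℝ) ^ 2 * δ) :
    (W * corrMatrix w X).trace ≤ Fintype.card V * (√(2 * r * δ) + c) := by
  set n : ℝ := ↑(Fintype.card V)
  set M := corrMatrix w X
  have hMM : (M * M).trace ≤ 2 * (n ^ 2 * δ) :=
    (trace_corrMatrix_mul_self_le hw X).trans (by gcongr)
  have hMM_nonneg : 0 ≤ (M * M).trace := (sum_nonneg fun _ _ => sq_nonneg _).trans
    (sum_re_diag_sq_le_re_trace_mul_self (posSemidef_corrMatrix hw X).isHermitian)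
  calc (W * M).trace
      ≤ √(#{i | c < hW.eigenvalues i} * (M * M).trace) + c * M.trace :=
        re_trace_mul_le_of_eigenvalues_le_one hW hle (posSemidef_corrMatrix hw X) hc
    _ ≤ √(r * (2 * (n ^ 2 * δ))) + c * n := by
        gcongr
        exact trace_corrMatrix_le_card hw X
    _ = √(n ^ 2 * (2 * r * δ)) + c * n := by ring_nf
    _ = n * (√(2 * r * δ) + c) := by
        rw [Real.sqrt_mul (sq_nonneg n), Real.sqrt_sq (Nat.cast_nonneg _)]
        ring

theorem local_correlation_le_of_global_correlation_le_general [DecidableEq V] {d r : ℕ}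
    (hd : 0 < d) {lam : ℝ} (hlam : 0 ≤ lam) {δ : ℝ} (G : SimpleGraph V) [DecidableRel G.Adj]
    (hreg : G.IsRegularOfDegree d) (hW : ((d : ℝ)⁻¹ • G.adjMatrix ℝ).IsHermitian)
    (hthreshold : #{i | lam < hW.eigenvalues i} ≤ r) (hw : w ∈ stdSimplex ℝ Ω) (X : V → Ω → α)
    (hglobal : (1 / (Fintype.card V : ℝ) ^ 2) * ∑ u, ∑ v, mutualInfo w (X u) (X v) ≤ δ) :
    (1 / ((Fintype.card V : ℝ) * d)) *
        ∑ u, ∑ v, (if G.Adj u v then sqCorr w (X u) (X v) else 0) ≤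
      √(2 * r * δ) + lam := by
  cases isEmpty_or_nonempty V
  · simp only [univ_eq_empty, sum_empty, mul_zero]
    positivity
  have hn : (0 : ℝ) < Fintype.card V := Nat.cast_pos.2 Fintype.card_pos
  rw [one_div, inv_mul_le_iff₀ (by positivity)] at hglobal
  calc (1 / ((Fintype.card V : ℝ) * d)) *
        ∑ u, ∑ v, (if G.Adj u v then sqCorr w (X u) (X v) else 0)
      = (1 / ((Fintype.card V : ℝ) * d)) * (G.adjMatrix ℝ * corrMatrix w X).trace :=
        congrArg _ (sum_sum_ite_adj_eq_trace (corrMatrix w X))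
    _ = (Fintype.card V : ℝ)⁻¹ * ((d : ℝ)⁻¹ • G.adjMatrix ℝ * corrMatrix w X).trace := by
        rw [smul_mul, trace_smul, smul_eq_mul, one_div, mul_inv, mul_assoc]
    _ ≤ √(2 * r * δ) + lam := by
        rw [inv_mul_le_iff₀ hn]
        exact trace_mul_corrMatrix_le hW (eigenvalues_inv_smul_adjMatrix_le_one hd hreg hW)
          hlam hthreshold hw X hglobal

end RandomVariables

/-- **Local correlation from global correlation in low threshold rank graphs**
(Lemma 2.5). Let `G` be a `d`-regular graph on `n` vertices whose uniform random
walk matrix `(1/d)·A_G` has at most `r` eigenvalues (with multiplicity) larger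
than `lam > 0`, and let `X = (X₁,…,Xₙ)` be a random vector over `Σⁿ` (given by
the weight function `w` on `Fin n → Σ`) whose global correlation
`E_{u,v∼[n]}[D_KL(law(Xᵤ,Xᵥ) ‖ law(Xᵤ) ⊗ law(Xᵥ))]` is at most `δ`. Then the
local correlation
`E_{(u,v)∼G}[∑_σ (Pr[Xᵤ = Xᵥ = σ] − Pr[Xᵤ = σ]·Pr[Xᵥ = σ])²]` is at most
`√(2rδ) + lam`. -/
theorem local_correlation_le_of_global_correlation_le
    {n d r : ℕ} (hd : 0 < d) (lam : ℝ) (hlam : 0 < lam) (δ : ℝ)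
    (G : SimpleGraph (Fin n)) [DecidableRel G.Adj] (hreg : G.IsRegularOfDegree d)
    (hW : (((d : ℝ)⁻¹) • G.adjMatrix ℝ).IsHermitian)
    (hthreshold : (Finset.univ.filter fun i => lam < hW.eigenvalues i).card ≤ r)
    {α : Type*} [Fintype α]
    (w : (Fin n → α) → ℝ) (hw : ∀ x, 0 ≤ w x) (hw1 : ∑ x, w x = 1)
    (hglobal : (1 / (n : ℝ) ^ 2) *
        ∑ u, ∑ v, klDivFin (fun p : α × α => prEvent w (fun x => x u = p.1 ∧ x v = p.2))
          (fun p : α × α => prEvent w (fun x => x u = p.1) * prEvent w (fun x => x v = p.2))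
      ≤ δ) :
    (1 / ((n : ℝ) * d)) * ∑ u, ∑ v,
        (if G.Adj u v then
          ∑ σ : α, (prEvent w (fun x => x u = σ ∧ x v = σ) -
              prEvent w (fun x => x u = σ) * prEvent w (fun x => x v = σ)) ^ 2
        else 0) ≤
      Real.sqrt (2 * r * δ) + lam := by
  simpa only [Fintype.card_fin, sqCorr, eventCov] using
    local_correlation_le_of_global_correlation_le_general hd hlam.le G hreg hW hthreshold
      ⟨hw, hw1⟩ (fun u x => x u) (by simpa only [Fintype.card_fin, mutualInfo] using hglobal)
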